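/- The step-indexed logical relation for the fine-grain call-by-value combinatory logic xCL_fg is sound for the contextual preorder: for all terms p,q of the same sort, if L(p,q) then p ≲ctx q. -/

import Mathlib

namespace FG

mutual
/-- Values of the fine-grain call-by-value combinatory logic xCL_fg. -/
inductive V : Type
  | I : V
  | K : V
  | S : V
  | K1 (t : C) : V
  | S1 (t : C) : V
  | S2 (s t : C) : V
/-- Computations of xCL_fg. -/
inductive C : Type
  | ret (v : V) : C            -- [v]
  | bull (t s : C) : C         -- t • s
  | rtri (v : V) (s : C) : C   -- v ▷ s
  | ltri (t : C) (v : V) : C   -- t ◁ v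
  | circ (v w : V) : C         -- v ∘ w
end

/-- Labeled transitions `v —u→ t` from values to computations (`LStep v u t`). -/
inductive LStep : V → V → C → Prop
  | S (v : V) : LStep .S v (.ret (.S1 (.ret v)))
  | S1 (t : C) (v : V) : LStep (.S1 t) v (.ret (.S2 t (.ret v)))
  | S2 (t s : C) (v : V) : LStep (.S2 t s) v (.bull (.ltri t v) (.ltri s v))
  | K (v : V) : LStep .K v (.ret (.K1 (.ret v)))
  | K1 (t : C) (v : V) : LStep (.K1 t) v t
  | I (v : V) : LStep .I v (.ret v)

/-- Unlabeled transitions from computations to values: `t → v`. -/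
inductive StepV : C → V → Prop
  | ret (v : V) : StepV (.ret v) v

/-- Unlabeled transitions from computations to computations: `t → t'`. -/
inductive StepC : C → C → Prop
  | bullL {t t' : C} (s : C) : StepC t t' → StepC (.bull t s) (.bull t' s)
  | bullV {t : C} {v : V} (s : C) : StepV t v → StepC (.bull t s) (.rtri v s)
  | ltriL {t t' : C} (v : V) : StepC t t' → StepC (.ltri t v) (.ltri t' v)
  | ltriV {t : C} {v : V} (w : V) : StepV t v → StepC (.ltri t w) (.circ v w)
  | rtriR {s s' : C} (v : V) : StepC s s' → StepC (.rtri v s) (.rtri v s')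
  | rtriV {s : C} {w : V} (v : V) : StepV s w → StepC (.rtri v s) (.circ v w)
  | circ {v w : V} {t : C} : LStep v w t → StepC (.circ v w) t

/-- `t ⇒ t'` between computations. -/
def StepsC : C → C → Prop := Relation.ReflTransGen StepC

/-- `t ⇒ v`: `t` reduces in finitely many steps to the value `v`. -/
def StepsV (t : C) (v : V) : Prop := ∃ t', StepsC t t' ∧ StepV t' v

/-- `t⇓`: the computation `t` reduces to some value. -/
def ConvC (t : C) : Prop := ∃ v, StepsV t v

/-- Applicative simulations for xCL_fg. -/
def IsSim (RV : V → V → Prop) (RC : C → C → Prop) : Prop :=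
  (∀ v w, RV v w → ∀ u t, LStep v u t → ∃ s, LStep w u s ∧ RC t s) ∧
  (∀ t s, RC t s →
    (∀ v, StepV t v → ∃ w, StepsV s w ∧ RV v w) ∧
    (∀ t', StepC t t' → ∃ s', StepsC s s' ∧ RC t' s'))

/-- Applicative similarity on values. -/
def AppSimV (v w : V) : Prop := ∃ RV RC, IsSim RV RC ∧ RV v w

/-- Applicative similarity on computations. -/
def AppSimC (t s : C) : Prop := ∃ RV RC, IsSim RV RC ∧ RC t s

/-- A sorted relation is a congruence if it is compatible with all operators of both sorts. -/
def IsCong (RV : V → V → Prop) (RC : C → C → Prop) : Prop :=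
  RV .S .S ∧ RV .K .K ∧ RV .I .I ∧
  (∀ t s, RC t s → RV (.K1 t) (.K1 s)) ∧
  (∀ t s, RC t s → RV (.S1 t) (.S1 s)) ∧
  (∀ t s t' s', RC t s → RC t' s' → RV (.S2 t t') (.S2 s s')) ∧
  (∀ v w, RV v w → RC (.ret v) (.ret w)) ∧
  (∀ t s t' s', RC t s → RC t' s' → RC (.bull t t') (.bull s s')) ∧
  (∀ v w t s, RV v w → RC t s → RC (.rtri v t) (.rtri w s)) ∧
  (∀ v w t s, RV v w → RC t s → RC (.ltri t v) (.ltri s w)) ∧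
  (∀ v w v' w', RV v w → RV v' w' → RC (.circ v v') (.circ w w'))

/-- Containment in the preorder `O` (the value component of `O` is total). -/
def SubO (RV : V → V → Prop) (RC : C → C → Prop) : Prop :=
  (∀ v w, RV v w → True) ∧ (∀ t s, RC t s → ConvC t → ConvC s)

/-- The contextual preorder (value sort): the greatest congruence contained in `O`. -/
def CtxLeV (v w : V) : Prop := ∃ RV RC, IsCong RV RC ∧ SubO RV RC ∧ RV v w

/-- The contextual preorder (computation sort). -/
def CtxLeC (t s : C) : Prop := ∃ RV RC, IsCong RV RC ∧ SubO RV RC ∧ RC t s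

/-- The step-indexed approximations `Lⁿ = (Lⁿ_v, Lⁿ_c)`. -/
def LrelN : ℕ → (V → V → Prop) × (C → C → Prop)
  | 0 => (fun _ _ => True, fun _ _ => True)
  | n+1 =>
    ( fun v w => ∀ u z, (LrelN n).1 u z → ∀ t, LStep v u t →
        ∃ s, LStep w z s ∧ (LrelN n).2 t s,
      fun t s =>
        (∀ v, StepV t v → ∃ w, StepsV s w ∧ (LrelN n).1 v w) ∧
        (∀ t', StepC t t' → ∃ s', StepsC s s' ∧ (LrelN n).2 t' s') )

/-- The step-indexed logical relation, value sort: `L_v = ⋂ₙ Lⁿ_v`. -/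
def LV (v w : V) : Prop := ∀ n, (LrelN n).1 v w

/-- The step-indexed logical relation, computation sort: `L_c = ⋂ₙ Lⁿ_c`. -/
def LC (t s : C) : Prop := ∀ n, (LrelN n).2 t s

end FG

namespace FGP
open FG

/-- Application of a value to a value, as a function. -/
def ap : V → V → C
  | .S, v => .ret (.S1 (.ret v))
  | .S1 t, v => .ret (.S2 t (.ret v))
  | .S2 t s, v => .bull (.ltri t v) (.ltri s v)
  | .K, v => .ret (.K1 (.ret v))
  | .K1 t, _ => t
  | .I, v => .ret v

theorem lstep_iff (v u : V) (t : C) : LStep v u t ↔ t = ap v u := by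
  constructor
  · intro h; cases h <;> rfl
  · rintro rfl
    cases v <;> constructor

/-- Timed big-step evaluation. -/
inductive Ev : C → ℕ → V → Prop
  | ret (v : V) : Ev (.ret v) 0 v
  | circ {p q : V} {k : ℕ} {v : V} : Ev (ap p q) k v → Ev (.circ p q) (k+1) v
  | rtri {p q : V} {s : C} {i k : ℕ} {v : V} :
      Ev s i q → Ev (ap p q) k v → Ev (.rtri p s) (i+k+2) v
  | ltri {p q : V} {t : C} {j k : ℕ} {v : V} :
      Ev t j p → Ev (ap p q) k v → Ev (.ltri t q) (j+k+2) v
  | bull {p q : V} {t s : C} {j i k : ℕ} {v : V} :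
      Ev t j p → Ev s i q → Ev (ap p q) k v → Ev (.bull t s) (j+i+k+3) v

theorem ev_ret {v w : V} {j : ℕ} : Ev (.ret v) j w ↔ j = 0 ∧ w = v := by
  constructor
  · intro h; cases h; exact ⟨rfl, rfl⟩
  · rintro ⟨rfl, rfl⟩; exact .ret _

theorem ev_circ {p q v : V} {J : ℕ} : Ev (.circ p q) J v ↔ ∃ k, Ev (ap p q) k v ∧ J = k+1 := by
  constructor
  · intro h; cases h with | circ h => exact ⟨_, h, rfl⟩
  · rintro ⟨k, h, rfl⟩; exact .circ h

theorem ev_rtri {p v : V} {s : C} {J : ℕ} : Ev (.rtri p s) J v ↔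
    ∃ i q k, Ev s i q ∧ Ev (ap p q) k v ∧ J = i+k+2 := by
  constructor
  · intro h; cases h with | rtri h h' => exact ⟨_, _, _, h, h', rfl⟩
  · rintro ⟨i, q, k, h, h', rfl⟩; exact .rtri h h'

theorem ev_ltri {q v : V} {t : C} {J : ℕ} : Ev (.ltri t q) J v ↔
    ∃ j p k, Ev t j p ∧ Ev (ap p q) k v ∧ J = j+k+2 := by
  constructor
  · intro h; cases h with | ltri h h' => exact ⟨_, _, _, h, h', rfl⟩
  · rintro ⟨i, q, k, h, h', rfl⟩; exact .ltri h h'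

theorem ev_bull {v : V} {t s : C} {J : ℕ} : Ev (.bull t s) J v ↔
    ∃ j p i q k, Ev t j p ∧ Ev s i q ∧ Ev (ap p q) k v ∧ J = j+i+k+3 := by
  constructor
  · intro h; cases h with | bull h h' h'' => exact ⟨_, _, _, _, _, h, h', h'', rfl⟩
  · rintro ⟨i, q, k, _, _, h, h', h'', rfl⟩; exact .bull h h' h''

theorem ev_det {t : C} {j : ℕ} {v : V} (h : Ev t j v) : ∀ {j' v'}, Ev t j' v' → j' = j ∧ v' = v := by
  induction h with
  | ret v => intro j' v' h; exact ev_ret.1 h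
  | circ _ ih =>
    intro j' v' h
    obtain ⟨k, h1, rfl⟩ := ev_circ.1 h
    obtain ⟨rfl, rfl⟩ := ih h1
    exact ⟨rfl, rfl⟩
  | rtri _ _ ih1 ih2 =>
    intro j' v' h
    obtain ⟨i, q, k, h1, h2, rfl⟩ := ev_rtri.1 h
    obtain ⟨rfl, rfl⟩ := ih1 h1
    obtain ⟨rfl, rfl⟩ := ih2 h2
    exact ⟨rfl, rfl⟩
  | ltri _ _ ih1 ih2 =>
    intro j' v' h
    obtain ⟨i, q, k, h1, h2, rfl⟩ := ev_ltri.1 h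
    obtain ⟨rfl, rfl⟩ := ih1 h1
    obtain ⟨rfl, rfl⟩ := ih2 h2
    exact ⟨rfl, rfl⟩
  | bull _ _ _ ih1 ih2 ih3 =>
    intro j' v' h
    obtain ⟨i, q, k, _, _, h1, h2, h3, rfl⟩ := ev_bull.1 h
    obtain ⟨rfl, rfl⟩ := ih1 h1
    obtain ⟨rfl, rfl⟩ := ih2 h2
    obtain ⟨rfl, rfl⟩ := ih3 h3
    exact ⟨rfl, rfl⟩

theorem stepV_iff {t : C} {v : V} : StepV t v ↔ t = .ret v := by
  constructor
  · intro h; cases h; rfl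
  · rintro rfl; constructor

theorem step_ev {t t' : C} (h : StepC t t') : ∀ {j v}, Ev t' j v → Ev t (j+1) v := by
  induction h with
  | bullL s _ ih =>
    intro j v h
    obtain ⟨j, p, i, q, k, h1, h2, h3, rfl⟩ := ev_bull.1 h
    exact ev_bull.2 ⟨_, _, _, _, _, ih h1, h2, h3, by omega⟩
  | bullV s hv =>
    intro j v h
    obtain rfl := stepV_iff.1 hv
    obtain ⟨i, q, k, h1, h2, rfl⟩ := ev_rtri.1 h
    exact ev_bull.2 ⟨_, _, _, _, _, .ret _, h1, h2, by omega⟩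
  | ltriL s _ ih =>
    intro j v h
    obtain ⟨j, p, k, h1, h2, rfl⟩ := ev_ltri.1 h
    exact ev_ltri.2 ⟨_, _, _, ih h1, h2, by omega⟩
  | ltriV s hv =>
    intro j v h
    obtain rfl := stepV_iff.1 hv
    obtain ⟨k, h1, rfl⟩ := ev_circ.1 h
    exact ev_ltri.2 ⟨_, _, _, .ret _, h1, by omega⟩
  | rtriR s _ ih =>
    intro j v h
    obtain ⟨j, p, k, h1, h2, rfl⟩ := ev_rtri.1 h
    exact ev_rtri.2 ⟨_, _, _, ih h1, h2, by omega⟩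
  | rtriV s hv =>
    intro j v h
    obtain rfl := stepV_iff.1 hv
    obtain ⟨k, h1, rfl⟩ := ev_circ.1 h
    exact ev_rtri.2 ⟨_, _, _, .ret _, h1, by omega⟩
  | circ hl =>
    intro j v h
    obtain rfl := (lstep_iff _ _ _).1 hl
    exact .circ h

theorem ev_cases {t : C} {j : ℕ} {v : V} (h : Ev t j v) :
    (j = 0 ∧ t = .ret v) ∨ ∃ j' t', j = j'+1 ∧ StepC t t' ∧ Ev t' j' v := by
  induction h with
  | ret v => exact .inl ⟨rfl, rfl⟩
  | circ h _ => exact .inr ⟨_, _, rfl, .circ ((lstep_iff _ _ _).2 rfl), h⟩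
  | rtri h1 h2 ih1 _ =>
    right
    rcases ih1 with ⟨rfl, rfl⟩ | ⟨j', t', rfl, hs, he⟩
    · exact ⟨_, _, by omega, .rtriV _ (.ret _), ev_circ.2 ⟨_, h2, rfl⟩⟩
    · refine ⟨_, _, ?_, .rtriR _ hs, ev_rtri.2 ⟨_, _, _, he, h2, rfl⟩⟩; omega
  | ltri h1 h2 ih1 _ =>
    right
    rcases ih1 with ⟨rfl, rfl⟩ | ⟨j', t', rfl, hs, he⟩
    · exact ⟨_, _, by omega, .ltriV _ (.ret _), ev_circ.2 ⟨_, h2, rfl⟩⟩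
    · refine ⟨_, _, ?_, .ltriL _ hs, ev_ltri.2 ⟨_, _, _, he, h2, rfl⟩⟩; omega
  | bull h1 h2 h3 ih1 _ _ =>
    right
    rcases ih1 with ⟨rfl, rfl⟩ | ⟨j', t', rfl, hs, he⟩
    · refine ⟨_, _, ?_, .bullV _ (.ret _), ev_rtri.2 ⟨_, _, _, h2, h3, rfl⟩⟩; omega
    · refine ⟨_, _, ?_, .bullL _ hs, ev_bull.2 ⟨_, _, _, _, _, he, h2, h3, rfl⟩⟩; omega

theorem ev_of_steps {t t' : C} (h : StepsC t t') : ∀ {j v}, Ev t' j v → ∃ i, Ev t i v := by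
  unfold StepsC at h
  induction h with
  | refl => intro j v h; exact ⟨_, h⟩
  | tail _ h2 ih => intro j v h; exact ih (step_ev h2 h)

theorem stepsV_iff {t : C} {v : V} : StepsV t v ↔ ∃ j, Ev t j v := by
  constructor
  · rintro ⟨t', h, hv⟩
    obtain rfl := stepV_iff.1 hv
    exact ev_of_steps h (.ret _)
  · rintro ⟨j, h⟩
    induction j generalizing t with
    | zero =>
      rcases ev_cases h with ⟨_, rfl⟩ | ⟨_, _, h, _⟩
      · exact ⟨_, .refl, .ret _⟩
      · omega
    | succ j ih =>
      rcases ev_cases h with ⟨h, rfl⟩ | ⟨j', t', hj, hs, he⟩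
      · omega
      · obtain rfl : j = j' := by omega
        obtain ⟨t2, h2, hv⟩ := ih he
        exact ⟨t2, Relation.ReflTransGen.head hs h2, hv⟩

theorem convC_iff {t : C} : ConvC t ↔ ∃ j v, Ev t j v := by
  unfold ConvC
  simp only [stepsV_iff]
  exact exists_comm

/-- Expression-level relation derived from an indexed relation on values. -/
def E (R : ℕ → V → V → Prop) (n : ℕ) (t s : C) : Prop :=
  ∀ j v, Ev t j v → j < n → ∃ i w, Ev s i w ∧ R (n-1-j) v w

def L (n : ℕ) (v w : V) : Prop := (LrelN n).1 v w

theorem Lc_iff (n : ℕ) : ∀ t s, (LrelN n).2 t s ↔ E L n t s := by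
  induction n with
  | zero => intro t s; simp [LrelN, E]
  | succ n ih =>
    intro t s
    constructor
    · rintro ⟨h1, h2⟩ j v hev hj
      rcases ev_cases hev with ⟨rfl, rfl⟩ | ⟨j', t', rfl, hs, he⟩
      · obtain ⟨w, hw, hL⟩ := h1 v (.ret v)
        obtain ⟨i, hi⟩ := stepsV_iff.1 hw
        exact ⟨i, w, hi, by simpa [L] using hL⟩
      · obtain ⟨s', hs', hL⟩ := h2 t' hs
        obtain ⟨i, w, hi, hw⟩ := (ih t' s').1 hL j' v he (by omega)
        obtain ⟨i', hi'⟩ := ev_of_steps hs' hi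
        refine ⟨i', w, hi', ?_⟩
        have : n + 1 - 1 - (j'+1) = n - 1 - j' := by omega
        rwa [this]
    · intro h
      refine ⟨?_, ?_⟩
      · intro v hv
        obtain rfl := stepV_iff.1 hv
        obtain ⟨i, w, hi, hw⟩ := h 0 v (.ret _) (by omega)
        exact ⟨w, stepsV_iff.2 ⟨i, hi⟩, by simpa [L] using hw⟩
      · intro t' hs
        refine ⟨s, .refl, (ih t' s).2 ?_⟩
        intro j v hev hj
        obtain ⟨i, w, hi, hw⟩ := h (j+1) v (step_ev hs hev) (by omega)
        refine ⟨i, w, hi, ?_⟩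
        have : n + 1 - 1 - (j+1) = n - 1 - j := by omega
        rwa [this] at hw

theorem L_zero (v w : V) : L 0 v w := by simp [L, LrelN]

theorem L_succ {n : ℕ} {v w : V} :
    L (n+1) v w ↔ ∀ u z, L n u z → E L n (ap v u) (ap w z) := by
  constructor
  · intro h u z huz
    obtain ⟨s, hs, hL⟩ := h u z huz _ ((lstep_iff _ _ _).2 rfl)
    obtain rfl := (lstep_iff _ _ _).1 hs
    exact (Lc_iff _ _ _).1 hL
  · intro h u z huz t ht
    obtain rfl := (lstep_iff _ _ _).1 ht
    exact ⟨_, (lstep_iff _ _ _).2 rfl, (Lc_iff _ _ _).2 (h u z huz)⟩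

/-- The decreasing step-indexed relation. -/
def M (n : ℕ) (v w : V) : Prop :=
  ∀ m, (hm : m < n) → ∀ u z, M m u z → ∀ j v', Ev (ap v u) j v' → (hj : j < m) →
    ∃ i w', Ev (ap w z) i w' ∧ M (m-1-j) v' w'
termination_by n

theorem M_iff {n : ℕ} {v w : V} :
    M n v w ↔ ∀ m, m < n → ∀ u z, M m u z → E M m (ap v u) (ap w z) := by
  rw [M]; rfl

theorem M_mono {n m : ℕ} {v w : V} (h : M n v w) (hm : m ≤ n) : M m v w := by
  rw [M_iff] at *
  intro k hk
  exact h k (by omega)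

theorem E_mono {n m : ℕ} {v w : C} (h : E M n v w) (hm : m ≤ n) : E M m v w := by
  intro j v hev hj
  obtain ⟨i, w, hi, hw⟩ := h j v hev (by omega)
  exact ⟨i, w, hi, M_mono hw (by omega)⟩

/-- Compatibility of `M`. -/
theorem M_ret {n : ℕ} {v w : V} (h : M n v w) : E M n (.ret v) (.ret w) := by
  intro j v hev hj
  obtain ⟨rfl, rfl⟩ := ev_ret.1 hev
  exact ⟨_, _, .ret _, M_mono h (by omega)⟩

theorem M_circ {n : ℕ} {v w v' w' : V} (h : M n v w) (h' : M n v' w') :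
    E M n (.circ v v') (.circ w w') := by
  intro J r hev hj
  obtain ⟨k, hk, rfl⟩ := ev_circ.1 hev
  obtain ⟨i, q, hi, hq⟩ := M_iff.1 h (n-1) (by omega) _ _ (M_mono h' (by omega)) k r hk (by omega)
  exact ⟨_, _, .circ hi, M_mono hq (by omega)⟩

theorem M_rtri {n : ℕ} {v w : V} {t s : C} (h : M n v w) (h' : E M n t s) :
    E M n (.rtri v t) (.rtri w s) := by
  intro J r hev hj
  obtain ⟨i, q, k, h1, h2, rfl⟩ := ev_rtri.1 hev
  obtain ⟨i', q', h1', hq⟩ := h' _ _ h1 (by omega)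
  obtain ⟨i, r', h2', hr⟩ := M_iff.1 h (n-1-i) (by omega) _ _ hq k r h2 (by omega)
  exact ⟨_, _, .rtri h1' h2', M_mono hr (by omega)⟩

theorem M_ltri {n : ℕ} {v w : V} {t s : C} (h : M n v w) (h' : E M n t s) :
    E M n (.ltri t v) (.ltri s w) := by
  intro J r hev hj
  obtain ⟨i, q, k, h1, h2, rfl⟩ := ev_ltri.1 hev
  obtain ⟨i', q', h1', hq⟩ := h' _ _ h1 (by omega)
  obtain ⟨i, r', h2', hr⟩ := M_iff.1 hq (n-1-i-1) (by omega) _ _ (M_mono h (by omega))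
    k r h2 (by omega)
  exact ⟨_, _, .ltri h1' h2', M_mono hr (by omega)⟩

theorem M_bull {n : ℕ} {t s t' s' : C} (h : E M n t s) (h' : E M n t' s') :
    E M n (.bull t t') (.bull s s') := by
  intro J r hev hj
  obtain ⟨j, p, i, q, k, h1, h2, h3, rfl⟩ := ev_bull.1 hev
  obtain ⟨_, p', h1', hp⟩ := h _ _ h1 (by omega)
  obtain ⟨_, q', h2', hq⟩ := h' _ _ h2 (by omega)
  obtain ⟨_, r', h3', hr⟩ := M_iff.1 hp (n-1-j-1-i) (by omega) _ _ (M_mono hq (by omega))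
    k r h3 (by omega)
  exact ⟨_, _, .bull h1' h2' h3', M_mono hr (by omega)⟩

theorem M_I (n : ℕ) : M n .I .I := by
  rw [M_iff]; intro m _ u z h; exact M_ret h

theorem M_K1 {n : ℕ} {t s : C} (h : E M n t s) : M n (.K1 t) (.K1 s) := by
  rw [M_iff]; intro m hm u z _; exact E_mono h hm.le

theorem M_K (n : ℕ) : M n .K .K := by
  rw [M_iff]; intro m _ u z h; exact M_ret (M_K1 (M_ret h))

theorem M_S2 {n : ℕ} {t s t' s' : C} (h : E M n t s) (h' : E M n t' s') :
    M n (.S2 t t') (.S2 s s') := by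
  rw [M_iff]; intro m hm u z hu
  exact M_bull (M_ltri hu (E_mono h hm.le)) (M_ltri hu (E_mono h' hm.le))

theorem M_S1 {n : ℕ} {t s : C} (h : E M n t s) : M n (.S1 t) (.S1 s) := by
  rw [M_iff]; intro m hm u z hu
  exact M_ret (M_S2 (E_mono h hm.le) (M_ret hu))

theorem M_S (n : ℕ) : M n .S .S := by
  rw [M_iff]; intro m _ u z h; exact M_ret (M_S1 (M_ret h))

mutual
theorem M_refl (n : ℕ) : ∀ v : V, M n v v
  | .I => M_I n
  | .K => M_K n
  | .S => M_S n
  | .K1 t => M_K1 (E_refl n t)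
  | .S1 t => M_S1 (E_refl n t)
  | .S2 t s => M_S2 (E_refl n t) (E_refl n s)
theorem E_refl (n : ℕ) : ∀ t : C, E M n t t
  | .ret v => M_ret (M_refl n v)
  | .bull t s => M_bull (E_refl n t) (E_refl n s)
  | .rtri v s => M_rtri (M_refl n v) (E_refl n s)
  | .ltri t v => M_ltri (M_refl n v) (E_refl n t)
  | .circ v w => M_circ (M_refl n v) (M_refl n w)
end

/-- From all-level relatedness of computations to all-level relatedness of results. -/
theorem E_all {R : ℕ → V → V → Prop} {t s : C} (h : ∀ n, E R n t s) {j : ℕ} {v : V} (hv : Ev t j v) :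
    ∃ i w, Ev s i w ∧ ∀ n, R n v w := by
  obtain ⟨i, w, hw, _⟩ := h (j+1) j v hv (by omega)
  refine ⟨i, w, hw, fun n => ?_⟩
  obtain ⟨i', w', hw', hR⟩ := h (n+1+j) j v hv (by omega)
  obtain ⟨rfl, rfl⟩ := ev_det hw hw'
  have : n + 1 + j - 1 - j = n := by omega
  rwa [this] at hR

theorem M_all_ap {v w : V} (h : ∀ n, M n v w) (u : V) (n : ℕ) : E M n (ap v u) (ap w u) :=
  M_iff.1 (h (n+1)) n (by omega) u u (M_refl n u)

theorem L_all_ap {v w u z : V} (h : ∀ n, L n v w) (h' : ∀ n, L n u z) (n : ℕ) :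
    E L n (ap v u) (ap w z) :=
  L_succ.1 (h (n+1)) u z (h' n)

theorem M_trans : ∀ (n : ℕ) {a b c : V}, M n a b → (∀ k, M k b c) → M n a c := by
  intro n
  induction n using Nat.strong_induction_on with
  | _ n ih =>
    intro a b c hab hbc
    rw [M_iff]
    intro m hm u z huz j v hev hj
    obtain ⟨i, w, hw, hM⟩ := M_iff.1 hab m hm u z huz j v hev hj
    obtain ⟨i', w', hw', hM'⟩ := E_all (M_all_ap hbc z) hw
    exact ⟨i', w', hw', ih _ (by omega) hM hM'⟩

inductive Po : Type
  | var (i : ℕ) : Po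
  | con (v : V) : Po
  | app (a b : Po) : Po

def cons (c : V) (ρ : ℕ → V) : ℕ → V
  | 0 => c
  | i+1 => ρ i

def cl (ρ : ℕ → V) : Po → C
  | .var i => .ret (ρ i)
  | .con v => .ret v
  | .app a b => .bull (cl ρ a) (cl ρ b)

/-- Bracket abstraction. -/
def lam : Po → Po
  | .var 0 => .con .I
  | .var (i+1) => .app (.con .K) (.var i)
  | .con v => .con (.K1 (.ret v))
  | .app a b => .app (.app (.con .S) (lam a)) (lam b)

/-- The value of an abstraction. -/
def lv (ρ : ℕ → V) : Po → V
  | .var 0 => .I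
  | .var (i+1) => .K1 (.ret (ρ i))
  | .con v => .K1 (.ret v)
  | .app a b => .S2 (.ret (lv ρ a)) (.ret (lv ρ b))

/-- Time needed to build the closure. -/
def tm : Po → ℕ
  | .var 0 => 0
  | .var (_+1) => 3
  | .con _ => 0
  | .app a b => tm a + tm b + 6

/-- Overhead of applying the closure. -/
def ov : Po → ℕ
  | .var _ => 0
  | .con _ => 0
  | .app a b => ov a + ov b + 4

theorem lam_ev (ρ : ℕ → V) : ∀ P, Ev (cl ρ (lam P)) (tm P) (lv ρ P)
  | .var 0 => .ret _
  | .var (i+1) => ev_bull.2 ⟨_, _, _, _, _, .ret _, .ret _, .ret _, rfl⟩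
  | .con v => .ret _
  | .app a b => ev_bull.2 ⟨_, _, _, _, _,
      ev_bull.2 ⟨_, _, _, _, _, .ret _, lam_ev ρ a, .ret _, rfl⟩, lam_ev ρ b, .ret _, by
        simp only [tm]; omega⟩

theorem lam_ev_iff {ρ : ℕ → V} {P : Po} {J : ℕ} {v : V} :
    Ev (cl ρ (lam P)) J v ↔ J = tm P ∧ v = lv ρ P := by
  constructor
  · intro h; exact ev_det (lam_ev ρ P) h
  · rintro ⟨rfl, rfl⟩; exact lam_ev ρ P

theorem lv_ap (ρ : ℕ → V) (c : V) : ∀ (P : Po) {J : ℕ} {v : V},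
    Ev (ap (lv ρ P) c) J v ↔ ∃ J', Ev (cl (cons c ρ) P) J' v ∧ J = J' + ov P := by
  intro P
  induction P with
  | var i =>
    intro J v
    cases i <;> simp [lv, ap, cl, cons, ov]
  | con w => intro J v; simp [lv, ap, cl, ov]
  | app a b iha ihb =>
    intro J v
    simp only [lv, ap, cl, ov]
    constructor
    · intro h
      obtain ⟨j, p, i, q, k, h1, h2, h3, rfl⟩ := ev_bull.1 h
      obtain ⟨j1, p1, k1, e1, g1, rfl⟩ := ev_ltri.1 h1
      obtain ⟨j2, p2, k2, e2, g2, rfl⟩ := ev_ltri.1 h2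
      obtain ⟨rfl, rfl⟩ := ev_ret.1 e1
      obtain ⟨rfl, rfl⟩ := ev_ret.1 e2
      obtain ⟨J1, f1, rfl⟩ := iha.1 g1
      obtain ⟨J2, f2, rfl⟩ := ihb.1 g2
      exact ⟨_, .bull f1 f2 h3, by omega⟩
    · rintro ⟨J', h, rfl⟩
      obtain ⟨j, p, i, q, k, h1, h2, h3, rfl⟩ := ev_bull.1 h
      exact ev_bull.2 ⟨_, _, _, _, _, .ltri (.ret _) (iha.2 ⟨_, h1, rfl⟩),
        .ltri (.ret _) (ihb.2 ⟨_, h2, rfl⟩), h3, by omega⟩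

/-- Delays. -/
def dl : ℕ → C
  | 0 => .ret .I
  | n+1 => .circ (.K1 (dl n)) .I

theorem dl_ev : ∀ n, Ev (dl n) n .I
  | 0 => .ret _
  | n+1 => .circ (dl_ev n)

/-- Constant clock. -/
def ck (n : ℕ) : V := .K1 (dl n)

/-- `σ` is a clock running for `s` steps. -/
def Clk (σ : V) (s : ℕ) : Prop := ∃ y, Ev (ap σ .I) s y

theorem clk_ck (n : ℕ) : Clk (ck n) n := ⟨_, dl_ev n⟩

/-- The expression `a a σ ρ x`. -/
def Q (a s r x : Po) : Po := .app (.app (.app (.app a a) s) r) x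

/-- `K p (q I)`: evaluate `p`, then `q I`, return the value of `p`. -/
def seqI (p q : Po) : Po := .app (.app (.con .K) p) (.app q (.con .I))

theorem seqI_ev {ρ : ℕ → V} {p q : Po} {J : ℕ} {v : V} : Ev (cl ρ (seqI p q)) J v ↔
    ∃ j i σ s, Ev (cl ρ p) j v ∧ Ev (cl ρ q) i σ ∧ Clk σ s ∧ J = j + i + s + 9 := by
  constructor
  · intro h
    obtain ⟨_, _, _, _, _, h1, h2, h3, rfl⟩ := ev_bull.1 h
    obtain ⟨_, _, _, _, _, g1, h4, h5, rfl⟩ := ev_bull.1 h1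
    obtain ⟨_, _, _, _, _, h6, h7, h8, rfl⟩ := ev_bull.1 h2
    obtain ⟨rfl, rfl⟩ := ev_ret.1 g1
    obtain ⟨rfl, rfl⟩ := ev_ret.1 h7
    obtain ⟨rfl, rfl⟩ := ev_ret.1 h5
    obtain ⟨rfl, rfl⟩ := ev_ret.1 h3
    exact ⟨_, _, _, _, h4, h6, ⟨_, h8⟩, by omega⟩
  · rintro ⟨j, i, σ, s, h1, h2, ⟨y, h3⟩, rfl⟩
    exact ev_bull.2 ⟨_, _, _, _, _, ev_bull.2 ⟨_, _, _, _, _, .ret _, h1, .ret _, rfl⟩,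
      ev_bull.2 ⟨_, _, _, _, _, h2, .ret _, h3, rfl⟩, .ret _, by omega⟩

/-- Body of the extended clock; vars: dummy 0, e 1, x 2, ρ 3, σ 4, a 5, δ 6, d 7. -/
def sB : Po := seqI (.app (.var 4) (.con .I)) (.var 6)

/-- Body of the adjustment operator; vars: e 0, x 1, ρ 2, σ 3, a 4, δ 5, d 6. -/
def B : Po := Q (.var 4) (lam sB) (.var 6)
  (seqI (.app (.var 1) (Q (.var 4) (.var 2) (.var 3) (.var 0))) (.var 2))

/-- Cost of a four-fold application of the adjustment operator. -/
def cQ : ℕ := tm (lam (lam (lam B))) + ov (lam (lam (lam (lam B)))) + tm (lam (lam B)) + ov (lam (lam (lam B)))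
  + tm (lam B) + ov (lam (lam B)) + tm B + ov (lam B) + 12

/-- Constant overhead of the adjustment operator. -/
def oA : ℕ := 2 * cQ + 12 + tm sB + ov B

def eA : ℕ → V
  | 0 => ck oA
  | 1 => ck (12 + ov sB)
  | _ => .I

def A : V := lv eA (lam (lam (lam (lam B))))

/-- Adjusted value: lowered by clock `σ`, raised by clock `ρ`. -/
def adj (σ ρ x : V) : V := lv (cons x (cons ρ (cons σ (cons A eA)))) B

theorem lamap {ρ : ℕ → V} {P : Po} {c v : V} {J : ℕ} :
    Ev (ap (lv ρ (lam P)) c) J v ↔ J = tm P + ov (lam P) ∧ v = lv (cons c ρ) P := by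
  rw [lv_ap]
  simp only [lam_ev_iff]
  constructor
  · rintro ⟨_, ⟨rfl, rfl⟩, rfl⟩; exact ⟨rfl, rfl⟩
  · rintro ⟨rfl, rfl⟩; exact ⟨_, ⟨rfl, rfl⟩, rfl⟩

theorem Q_ev {ε : ℕ → V} {a s r x : Po} (ha : cl ε a = .ret A) {J : ℕ} {v : V} :
    Ev (cl ε (Q a s r x)) J v ↔ ∃ js σ jr ρ jx y, Ev (cl ε s) js σ ∧ Ev (cl ε r) jr ρ ∧
      Ev (cl ε x) jx y ∧ v = adj σ ρ y ∧ J = js + jr + jx + cQ := by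
  constructor
  · intro h
    obtain ⟨_, _, _, _, _, h1, hx, a4, rfl⟩ := ev_bull.1 h
    obtain ⟨_, _, _, _, _, g1, hr, a3, rfl⟩ := ev_bull.1 h1
    obtain ⟨_, _, _, _, _, f1, hs, a2, rfl⟩ := ev_bull.1 g1
    obtain ⟨_, _, _, _, _, e1, e2, a1, rfl⟩ := ev_bull.1 f1
    rw [ha] at e1 e2
    obtain ⟨rfl, rfl⟩ := ev_ret.1 e1
    obtain ⟨rfl, rfl⟩ := ev_ret.1 e2
    obtain ⟨rfl, rfl⟩ := lamap.1 a1
    obtain ⟨rfl, rfl⟩ := lamap.1 a2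
    obtain ⟨rfl, rfl⟩ := lamap.1 a3
    obtain ⟨rfl, rfl⟩ := lamap.1 a4
    exact ⟨_, _, _, _, _, _, hs, hr, hx, rfl, by unfold cQ; omega⟩
  · rintro ⟨js, σ, jr, ρ, jx, y, hs, hr, hx, rfl, rfl⟩
    have h0 : Ev (cl ε a) 0 A := by rw [ha]; exact .ret _
    refine ev_bull.2 ⟨_, _, _, _, _, ev_bull.2 ⟨_, _, _, _, _, ev_bull.2 ⟨_, _, _, _, _,
      ev_bull.2 ⟨_, _, _, _, _, h0, h0, lamap.2 ⟨rfl, rfl⟩, rfl⟩, hs, lamap.2 ⟨rfl, rfl⟩, rfl⟩,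
      hr, lamap.2 ⟨rfl, rfl⟩, rfl⟩, hx, lamap.2 ⟨rfl, rfl⟩, ?_⟩
    unfold cQ; omega

theorem Clk.det {σ : V} {s s' : ℕ} (h : Clk σ s) (h' : Clk σ s') : s' = s := by
  obtain ⟨_, h⟩ := h
  obtain ⟨_, h'⟩ := h'
  exact (ev_det h h').1

def sx (σ ρ x e : V) : V := lv (cons e (cons x (cons ρ (cons σ (cons A eA))))) sB

theorem clk_sx {σ ρ x e : V} {s : ℕ} (hσ : Clk σ s) :
    Clk (sx σ ρ x e) (s + oA + 12 + ov sB) := by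
  obtain ⟨y, hy⟩ := hσ
  refine ⟨y, (lv_ap _ _ _).2 ⟨s + 3 + 0 + oA + 9, seqI_ev.2 ⟨_, _, _, _, ?_, .ret _, clk_ck oA, rfl⟩,
    by omega⟩⟩
  exact ev_bull.2 ⟨_, _, _, _, _, .ret _, .ret _, hy, by omega⟩

/-- Behaviour of the adjusted value. -/
theorem adj_ap {σ ρ x e v : V} {J : ℕ} :
    Ev (ap (adj σ ρ x) e) J v ↔ ∃ r j p, Clk ρ r ∧ Ev (ap x (adj ρ σ e)) j p ∧
      v = adj (sx σ ρ x e) (ck (12 + ov sB)) p ∧ J = j + r + oA := by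
  have hA : cl (cons e (cons x (cons ρ (cons σ (cons A eA))))) (.var 4) = .ret A := rfl
  rw [show adj σ ρ x = lv (cons x (cons ρ (cons σ (cons A eA)))) B from rfl, lv_ap]
  constructor
  · rintro ⟨J', h, rfl⟩
    obtain ⟨js, σ', jr, ρ', jx, y, hs, hr, hx, rfl, rfl⟩ := (Q_ev hA).1 h
    obtain ⟨rfl, rfl⟩ := lam_ev_iff.1 hs
    obtain ⟨rfl, rfl⟩ := ev_ret.1 hr
    obtain ⟨j, i, ρ'', r, hx', hρ, hc, rfl⟩ := seqI_ev.1 hx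
    obtain ⟨rfl, rfl⟩ := ev_ret.1 hρ
    obtain ⟨_, _, _, _, _, h1, h2, h3, rfl⟩ := ev_bull.1 hx'
    obtain ⟨rfl, rfl⟩ := ev_ret.1 h1
    obtain ⟨_, _, _, _, _, _, g1, g2, g3, rfl, rfl⟩ := (Q_ev hA).1 h2
    obtain ⟨rfl, rfl⟩ := ev_ret.1 g1
    obtain ⟨rfl, rfl⟩ := ev_ret.1 g2
    obtain ⟨rfl, rfl⟩ := ev_ret.1 g3
    exact ⟨r, _, _, hc, h3, rfl, by unfold oA; omega⟩
  · rintro ⟨r, j, p, hc, h3, rfl, rfl⟩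
    refine ⟨_, (Q_ev hA).2 ⟨_, _, _, _, _, _, lam_ev _ _, .ret _, seqI_ev.2 ⟨_, _, _, _,
      ev_bull.2 ⟨_, _, _, _, _, .ret _, (Q_ev hA).2 ⟨_, _, _, _, _, _, .ret _, .ret _, .ret _,
        rfl, rfl⟩, h3, rfl⟩, .ret _, hc, rfl⟩, rfl, rfl⟩, ?_⟩
    unfold oA; omega

attribute [irreducible] oA cQ tm ov

theorem adj_L : ∀ (B N N' : ℕ) {σ ρ x y : V} {s r : ℕ}, N + N' ≤ B → Clk σ s → Clk ρ r →
    N' + s = N + r → L N x y → L N' (adj σ ρ x) y := by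
  intro B
  induction B with
  | zero =>
    intro N N' σ ρ x y s r hB hσ hρ he h
    obtain rfl : N' = 0 := by omega
    exact L_zero _ _
  | succ B ih =>
    intro N N' σ ρ x y s r hB hσ hρ he h
    cases N' with
    | zero => exact L_zero _ _
    | succ n =>
      rw [L_succ]
      intro u z hu J v hev hJ
      obtain ⟨r', j, p, hc, hp, rfl, rfl⟩ := adj_ap.1 hev
      obtain rfl := (Clk.det hρ hc).symm
      obtain ⟨M', rfl⟩ : ∃ M', N = M' + 1 := ⟨N - 1, by omega⟩
      have h1 : L M' (adj ρ σ u) z := ih n M' (by omega) hρ hσ (by omega) hu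
      obtain ⟨i, q, hq, hL⟩ := L_succ.1 h _ _ h1 j p hp (by omega)
      have h2 : M' - 1 - j + (n - 1 - (j + r + oA)) ≤ B := by omega
      have h3 : n - 1 - (j + r + oA) + (s + oA + 12 + ov sB) = M' - 1 - j + (12 + ov sB) := by omega
      refine ⟨i, q, hq, ?_⟩
      exact ih (M' - 1 - j) (n - 1 - (j + r + oA)) (s := s + oA + 12 + ov sB) (r := 12 + ov sB)
        h2 (clk_sx hσ) (clk_ck _) h3 hL

theorem adj_M : ∀ (n : ℕ) {σ ρ x x' : V} {s r : ℕ}, Clk σ s → Clk ρ r →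
    M n x x' → M n x (adj σ ρ x') := by
  intro n
  induction n using Nat.strong_induction_on with
  | _ n ih =>
    intro σ ρ x x' s r hσ hρ h
    rw [M_iff]
    intro m hm u z hu j v hev hj
    obtain ⟨i, w, hw, hM⟩ := M_iff.1 h m hm _ _ (ih m hm hρ hσ hu) j v hev hj
    exact ⟨_, _, adj_ap.2 ⟨_, _, _, hρ, hw, rfl, rfl⟩, ih _ (by omega) (clk_sx hσ) (clk_ck _) hM⟩

/-- Good version of `I`. -/
def bI : Po := Q (.var 1) (.var 2) (.var 3) (.var 0)
def eI : ℕ → V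
  | 0 => A
  | 1 => ck (1 + cQ + ov bI)
  | _ => ck 0
def gI : V := lv eI bI

theorem gI_ap {u v : V} {J : ℕ} : Ev (ap gI u) J v ↔
    v = adj (ck (1 + cQ + ov bI)) (ck 0) u ∧ J = cQ + ov bI := by
  have hA : cl (cons u eI) (.var 1) = .ret A := rfl
  rw [show gI = lv eI bI from rfl, lv_ap]
  constructor
  · rintro ⟨J', h, rfl⟩
    obtain ⟨_, _, _, _, _, _, g1, g2, g3, rfl, rfl⟩ := (Q_ev hA).1 h
    obtain ⟨rfl, rfl⟩ := ev_ret.1 g1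
    obtain ⟨rfl, rfl⟩ := ev_ret.1 g2
    obtain ⟨rfl, rfl⟩ := ev_ret.1 g3
    exact ⟨rfl, by omega⟩
  · rintro ⟨rfl, rfl⟩
    exact ⟨_, (Q_ev hA).2 ⟨_, _, _, _, _, _, .ret _, .ret _, .ret _, rfl, rfl⟩, by omega⟩

theorem gI_L (n : ℕ) : L n gI .I := by
  cases n with
  | zero => exact L_zero _ _
  | succ n =>
    rw [L_succ]
    intro u z hu J v hev hJ
    obtain ⟨rfl, rfl⟩ := gI_ap.1 hev
    exact ⟨_, _, .ret _, adj_L _ _ _ le_rfl (clk_ck _) (clk_ck _) (by omega) hu⟩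

theorem gI_M (n : ℕ) : M n .I gI := by
  rw [M_iff]
  intro m hm u z hu j v hev hj
  obtain ⟨rfl, rfl⟩ := ev_ret.1 hev
  exact ⟨_, _, gI_ap.2 ⟨rfl, rfl⟩, adj_M _ (clk_ck _) (clk_ck _) (M_mono hu (by omega))⟩

/-- Good version of `K`. -/
def bK : Po := Q (.var 2) (.var 3) (.var 4) (.var 1)
def dK : ℕ := 3 + (tm bK + ov (lam bK)) + (cQ + ov bK)
def eK : ℕ → V
  | 0 => A
  | 1 => ck dK
  | _ => ck 0
def gK : V := lv eK (lam bK)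
def gK1 (c : V) : V := lv (cons c eK) bK

theorem gK1_ap {c u v : V} {J : ℕ} : Ev (ap (gK1 c) u) J v ↔
    v = adj (ck dK) (ck 0) c ∧ J = cQ + ov bK := by
  have hA : cl (cons u (cons c eK)) (.var 2) = .ret A := rfl
  rw [show gK1 c = lv (cons c eK) bK from rfl, lv_ap]
  constructor
  · rintro ⟨J', h, rfl⟩
    obtain ⟨_, _, _, _, _, _, g1, g2, g3, rfl, rfl⟩ := (Q_ev hA).1 h
    obtain ⟨rfl, rfl⟩ := ev_ret.1 g1
    obtain ⟨rfl, rfl⟩ := ev_ret.1 g2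
    obtain ⟨rfl, rfl⟩ := ev_ret.1 g3
    exact ⟨rfl, by omega⟩
  · rintro ⟨rfl, rfl⟩
    exact ⟨_, (Q_ev hA).2 ⟨_, _, _, _, _, _, .ret _, .ret _, .ret _, rfl, rfl⟩, by omega⟩

theorem gK_L (n : ℕ) : L n gK .K := by
  cases n with
  | zero => exact L_zero _ _
  | succ n =>
    rw [L_succ]
    intro u z hu J v hev hJ
    obtain ⟨rfl, rfl⟩ := lamap.1 hev
    refine ⟨_, _, .ret _, ?_⟩
    obtain h0 | ⟨m, hm⟩ : n - 1 - (tm bK + ov (lam bK)) = 0 ∨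
      ∃ m, n - 1 - (tm bK + ov (lam bK)) = m + 1 := by
      cases n - 1 - (tm bK + ov (lam bK)) <;> simp
    · rw [h0]; exact L_zero _ _
    · rw [hm, L_succ]
      intro u' z' _ J v hev hJ'
      obtain ⟨rfl, rfl⟩ := gK1_ap.1 hev
      exact ⟨_, _, .ret _, adj_L _ _ _ le_rfl (clk_ck _) (clk_ck _) (by unfold dK; omega) hu⟩

theorem gK_M (n : ℕ) : M n .K gK := by
  rw [M_iff]
  intro m hm u z hu j v hev hj
  obtain ⟨rfl, rfl⟩ := ev_ret.1 hev
  refine ⟨_, _, lamap.2 ⟨rfl, rfl⟩, ?_⟩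
  rw [M_iff]
  intro m' hm' u' z' _ j v hev hj
  obtain ⟨rfl, rfl⟩ := ev_ret.1 hev
  exact ⟨_, _, gK1_ap.2 ⟨rfl, rfl⟩, adj_M _ (clk_ck _) (clk_ck _) (M_mono hu (by omega))⟩

/-- Good version of `S`. -/
def bα : Po := seqI (.app (.var 3) (Q (.var 4) (.var 7) (.var 5) (.var 1))) (.var 8)
def bβ : Po := seqI (.app (.var 2) (Q (.var 4) (.var 7) (.var 6) (.var 1))) (.var 9)
def bS : Po := Q (.var 3) (lam bβ) (.var 9)
  (.app (.app (.var 2) (Q (.var 3) (.var 6) (.var 4) (.var 0)))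
    (Q (.var 3) (lam bα) (lam bβ) (.app (.var 1) (Q (.var 3) (.var 6) (.var 5) (.var 0)))))
def o1 : ℕ := tm (lam bS) + ov (lam (lam bS))
def o2 : ℕ := tm bS + ov (lam bS)
def κ : ℕ := 2 * tm bβ + tm bα + 4 * cQ + 9 + ov bS
def cα : ℕ := cQ + 12 + ov bα
def cβ : ℕ := cQ + 12 + ov bβ
def δp : ℕ := 3 + o1 + o2
def δq : ℕ := 1 + o2
def δα : ℕ := κ + o2 + cβ
def δβ : ℕ := 1 + κ + o1 + o2 + cα
def δr : ℕ := cα + cβ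
def eS : ℕ → V
  | 0 => A
  | 1 => ck δp
  | 2 => ck δq
  | 3 => ck 0
  | 4 => ck δα
  | 5 => ck δβ
  | _ => ck δr
def gS : V := lv eS (lam (lam bS))
def gS1 (p : V) : V := lv (cons p eS) (lam bS)
def gS2 (p q : V) : V := lv (cons q (cons p eS)) bS
def vα (p q c : V) : V := lv (cons c (cons q (cons p eS))) bα
def vβ (p q c : V) : V := lv (cons c (cons q (cons p eS))) bβ

attribute [irreducible] o1 o2 κ cα cβ δp δq δα δβ δr

theorem clk_α {p q c g : V} {j : ℕ} (h : Ev (ap p (adj (ck 0) (ck δp) c)) j g) :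
    Clk (vα p q c) (j + cα + δα) := by
  have hA : cl (cons .I (cons c (cons q (cons p eS)))) (.var 4) = .ret A := rfl
  refine ⟨_, (lv_ap _ _ _).2 ⟨_, seqI_ev.2 ⟨_, _, _, _, ev_bull.2 ⟨_, _, _, _, _, .ret _,
    (Q_ev hA).2 ⟨_, _, _, _, _, _, .ret _, .ret _, .ret _, rfl, rfl⟩, h, rfl⟩, .ret _,
      clk_ck δα, rfl⟩, ?_⟩⟩
  unfold cα; omega

theorem clk_β {p q c g : V} {j : ℕ} (h : Ev (ap q (adj (ck 0) (ck δq) c)) j g) :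
    Clk (vβ p q c) (j + cβ + δβ) := by
  have hA : cl (cons .I (cons c (cons q (cons p eS)))) (.var 4) = .ret A := rfl
  refine ⟨_, (lv_ap _ _ _).2 ⟨_, seqI_ev.2 ⟨_, _, _, _, ev_bull.2 ⟨_, _, _, _, _, .ret _,
    (Q_ev hA).2 ⟨_, _, _, _, _, _, .ret _, .ret _, .ret _, rfl, rfl⟩, h, rfl⟩, .ret _,
      clk_ck δβ, rfl⟩, ?_⟩⟩
  unfold cβ; omega

theorem gS2_ap {p q c v : V} {J : ℕ} : Ev (ap (gS2 p q) c) J v ↔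
    ∃ j1 g j2 h j3 r, Ev (ap p (adj (ck 0) (ck δp) c)) j1 g ∧
      Ev (ap q (adj (ck 0) (ck δq) c)) j2 h ∧
      Ev (ap g (adj (vα p q c) (vβ p q c) h)) j3 r ∧
      v = adj (vβ p q c) (ck δr) r ∧ J = j1 + j2 + j3 + κ := by
  have hA : cl (cons c (cons q (cons p eS))) (.var 3) = .ret A := rfl
  rw [show gS2 p q = lv (cons q (cons p eS)) bS from rfl, lv_ap]
  constructor
  · rintro ⟨J', h, rfl⟩
    obtain ⟨_, _, _, _, _, _, g1, g2, g3, rfl, rfl⟩ := (Q_ev hA).1 h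
    obtain ⟨rfl, rfl⟩ := lam_ev_iff.1 g1
    obtain ⟨rfl, rfl⟩ := ev_ret.1 g2
    obtain ⟨_, _, _, _, _, f1, f2, f3, rfl⟩ := ev_bull.1 g3
    obtain ⟨_, _, _, _, _, a1, a2, a3, rfl⟩ := ev_bull.1 f1
    obtain ⟨rfl, rfl⟩ := ev_ret.1 a1
    obtain ⟨_, _, _, _, _, _, b1, b2, b3, rfl, rfl⟩ := (Q_ev hA).1 a2
    obtain ⟨rfl, rfl⟩ := ev_ret.1 b1
    obtain ⟨rfl, rfl⟩ := ev_ret.1 b2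
    obtain ⟨rfl, rfl⟩ := ev_ret.1 b3
    obtain ⟨_, _, _, _, _, _, c1, c2, c3, rfl, rfl⟩ := (Q_ev hA).1 f2
    obtain ⟨rfl, rfl⟩ := lam_ev_iff.1 c1
    obtain ⟨rfl, rfl⟩ := lam_ev_iff.1 c2
    obtain ⟨_, _, _, _, _, d1, d2, d3, rfl⟩ := ev_bull.1 c3
    obtain ⟨rfl, rfl⟩ := ev_ret.1 d1
    obtain ⟨_, _, _, _, _, _, e1, e2, e3, rfl, rfl⟩ := (Q_ev hA).1 d2
    obtain ⟨rfl, rfl⟩ := ev_ret.1 e1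
    obtain ⟨rfl, rfl⟩ := ev_ret.1 e2
    obtain ⟨rfl, rfl⟩ := ev_ret.1 e3
    exact ⟨_, _, _, _, _, _, a3, d3, f3, rfl, by unfold κ; omega⟩
  · rintro ⟨j1, g, j2, h, j3, r, h1, h2, h3, rfl, rfl⟩
    have q1 := (Q_ev (s := .var 6) (r := .var 4) (x := .var 0) hA).2
      ⟨_, _, _, _, _, _, .ret _, .ret _, .ret _, rfl, rfl⟩
    have q2 := (Q_ev (s := .var 6) (r := .var 5) (x := .var 0) hA).2
      ⟨_, _, _, _, _, _, .ret _, .ret _, .ret _, rfl, rfl⟩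
    have r1 := (Ev.bull (Ev.ret _ : Ev (cl (cons c (cons q (cons p eS))) (.var 2)) _ _) q1 h1)
    have r2 := (Ev.bull (Ev.ret _ : Ev (cl (cons c (cons q (cons p eS))) (.var 1)) _ _) q2 h2)
    have r3 := (Q_ev (x := .app (.var 1) (Q (.var 3) (.var 6) (.var 5) (.var 0))) hA).2
      ⟨_, _, _, _, _, _, lam_ev _ bα, lam_ev _ bβ, r2, rfl, rfl⟩
    refine ⟨_, (Q_ev hA).2 ⟨_, _, _, _, _, _, lam_ev _ bβ, .ret _, .bull r1 r3 h3, rfl, rfl⟩, ?_⟩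
    unfold κ; omega

theorem gS2_L {N2 : ℕ} {p q p' q' : V} {t s : C} {i1 i2 : ℕ} (hp : L (N2 + 4 + o1 + o2) p p')
    (hq : L (N2 + 2 + o2) q q') (ht : Ev t i1 p') (hs : Ev s i2 q') :
    L (N2 + 1) (gS2 p q) (.S2 t s) := by
  rw [L_succ]
  intro u z hu J v hev hJ
  obtain ⟨j1, g, j2, h, j3, r, h1, h2, h3, rfl, rfl⟩ := gS2_ap.1 hev
  have u1 : L (N2 + 3 + o1 + o2) (adj (ck 0) (ck δp) u) z :=
    adj_L _ _ _ le_rfl (clk_ck _) (clk_ck _) (by unfold δp; omega) hu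
  have u2 : L (N2 + 1 + o2) (adj (ck 0) (ck δq) u) z :=
    adj_L _ _ _ le_rfl (clk_ck _) (clk_ck _) (by unfold δq; omega) hu
  have e1 : N2 + 4 + o1 + o2 = (N2 + 3 + o1 + o2) + 1 := by omega
  have e2 : N2 + 2 + o2 = (N2 + 1 + o2) + 1 := by omega
  rw [e1, L_succ] at hp
  rw [e2, L_succ] at hq
  obtain ⟨k1, g', hg', Lg⟩ := hp _ _ u1 _ _ h1 (by omega)
  obtain ⟨k2, h', hh', Lh⟩ := hq _ _ u2 _ _ h2 (by omega)
  have e3 : N2 + 3 + o1 + o2 - 1 - j1 = (N2 + 1 + o1 + o2 - j1) + 1 := by omega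
  rw [e3, L_succ] at Lg
  have ca := clk_α (q := q) h1
  have cb := clk_β (p := p) h2
  have u3 : L (N2 + 1 + o1 + o2 - j1) (adj (vα p q u) (vβ p q u) h) h' :=
    adj_L _ _ _ le_rfl ca cb (by unfold δα δβ; omega) Lh
  obtain ⟨k3, r', hr', Lr⟩ := Lg _ _ u3 _ _ h3 (by omega)
  exact ⟨_, _, .bull (.ltri ht hg') (.ltri hs hh') hr',
    adj_L _ _ _ le_rfl cb (clk_ck _) (by unfold δβ δr; omega) Lr⟩

theorem gS1_L {N1 : ℕ} {p p' : V} {t : C} {i1 : ℕ} (hp : L (N1 + 2 + o1) p p')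
    (ht : Ev t i1 p') : L (N1 + 1) (gS1 p) (.S1 t) := by
  rw [L_succ]
  intro u z hu J v hev hJ
  obtain ⟨hJ', rfl⟩ := lamap.1 hev
  have : J = o2 := by rw [hJ']; unfold o2; rfl
  subst this
  refine ⟨_, _, .ret _, ?_⟩
  obtain h0 | ⟨m, hm⟩ : N1 - 1 - o2 = 0 ∨ ∃ m, N1 - 1 - o2 = m + 1 := by
    cases N1 - 1 - o2 <;> simp
  · rw [h0]; exact L_zero _ _
  · rw [hm]
    obtain rfl : N1 = m + 2 + o2 := by omega
    refine gS2_L ?_ hu ht (.ret _)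
    have : m + 4 + o1 + o2 = m + 2 + o2 + 2 + o1 := by omega
    rwa [this]

theorem gS_L (n : ℕ) : L n gS .S := by
  cases n with
  | zero => exact L_zero _ _
  | succ n =>
    rw [L_succ]
    intro u z hu J v hev hJ
    obtain ⟨hJ', rfl⟩ := lamap.1 hev
    have : J = o1 := by rw [hJ']; unfold o1; rfl
    subst this
    refine ⟨_, _, .ret _, ?_⟩
    obtain h0 | ⟨m, hm⟩ : n - 1 - o1 = 0 ∨ ∃ m, n - 1 - o1 = m + 1 := by
      cases n - 1 - o1 <;> simp
    · rw [h0]; exact L_zero _ _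
    · rw [hm]
      obtain rfl : n = m + 2 + o1 := by omega
      exact gS1_L hu (.ret _)

theorem gS2_M {n : ℕ} {t s : C} {p' q' : V} (ht : E M n t (.ret p')) (hs : E M n s (.ret q')) :
    M n (.S2 t s) (gS2 p' q') := by
  rw [M_iff]
  intro m hm u z hu J v hev hJ
  obtain ⟨_, g, _, h, k3, h1, h2, h3, rfl⟩ := ev_bull.1 hev
  obtain ⟨i1, p, k1, t1, t2, rfl⟩ := ev_ltri.1 h1
  obtain ⟨i2, q, k2, s1, s2, rfl⟩ := ev_ltri.1 h2
  obtain ⟨_, p₀, a, Mp⟩ := ht _ _ t1 (by omega)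
  obtain ⟨rfl, rfl⟩ := ev_ret.1 a
  obtain ⟨_, q₀, b, Mq⟩ := hs _ _ s1 (by omega)
  obtain ⟨rfl, rfl⟩ := ev_ret.1 b
  have u1 := adj_M _ (clk_ck 0) (clk_ck δp) hu
  have u2 := adj_M _ (clk_ck 0) (clk_ck δq) hu
  obtain ⟨j1, g', hg', Mg⟩ := M_iff.1 Mp (m - 1 - i1) (by omega) _ _ (M_mono u1 (by omega)) _ _ t2
    (by omega)
  obtain ⟨j2, h', hh', Mh⟩ := M_iff.1 Mq (m - 1 - i2) (by omega) _ _ (M_mono u2 (by omega)) _ _ s2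
    (by omega)
  have u3 := adj_M _ (clk_α (q := q₀) hg') (clk_β (p := p₀) hh') Mh
  obtain ⟨j3, r', hr', Mr⟩ := M_iff.1 Mg (m - 3 - i1 - k1 - i2 - k2) (by omega) _ _
    (M_mono u3 (by omega)) _ _ h3 (by omega)
  exact ⟨_, _, gS2_ap.2 ⟨_, _, _, _, _, _, hg', hh', hr', rfl, rfl⟩,
    M_mono (adj_M _ (clk_β (p := p₀) hh') (clk_ck _) Mr) (by omega)⟩

theorem gS1_M {n : ℕ} {t : C} {p' : V} (ht : E M n t (.ret p')) : M n (.S1 t) (gS1 p') := by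
  rw [M_iff]
  intro m hm u z hu j v hev hj
  obtain ⟨rfl, rfl⟩ := ev_ret.1 hev
  exact ⟨_, _, lamap.2 ⟨rfl, rfl⟩, gS2_M (E_mono ht (by omega)) (M_ret (M_mono hu (by omega)))⟩

theorem gS_M (n : ℕ) : M n .S gS := by
  rw [M_iff]
  intro m hm u z hu j v hev hj
  obtain ⟨rfl, rfl⟩ := ev_ret.1 hev
  exact ⟨_, _, lamap.2 ⟨rfl, rfl⟩, gS1_M (M_ret (M_mono hu (by omega)))⟩

theorem E_of {R : ℕ → V → V → Prop} {t s : C}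
    (h : ∀ j v, Ev t j v → ∃ i w, Ev s i w ∧ ∀ n, R n v w) (n : ℕ) : E R n t s := by
  intro j v hev _
  obtain ⟨i, w, hw, hR⟩ := h j v hev
  exact ⟨i, w, hw, hR _⟩

theorem E_ret_of {n : ℕ} {t t' : C} {j : ℕ} {p' : V} (h : E M n t t') (hp : Ev t' j p') :
    E M n t (.ret p') := by
  intro i v hev hi
  obtain ⟨_, w, hw, hM⟩ := h i v hev hi
  obtain ⟨rfl, rfl⟩ := ev_det hp hw
  exact ⟨_, _, .ret _, hM⟩

theorem L_S2_div {t s : C} (h : ¬ ((∃ j p, Ev t j p) ∧ ∃ j p, Ev s j p)) (w : V) (n : ℕ) :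
    L n (.S2 t s) w := by
  cases n with
  | zero => exact L_zero _ _
  | succ n =>
    rw [L_succ]
    intro u z hu J v hev hJ
    exfalso
    obtain ⟨_, _, _, _, _, h1, h2, _, _⟩ := ev_bull.1 hev
    obtain ⟨_, _, _, a, _, _⟩ := ev_ltri.1 h1
    obtain ⟨_, _, _, b, _, _⟩ := ev_ltri.1 h2
    exact h ⟨⟨_, _, a⟩, ⟨_, _, b⟩⟩

def GV (u : V) : Prop := ∃ u', (∀ n, L n u' u) ∧ ∀ n, M n u u'
def GC (t : C) : Prop := ∃ t', (∀ n, E L n t' t) ∧ ∀ n, E M n t t'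

theorem GV_K1 {t : C} (h : GC t) : GV (.K1 t) := by
  obtain ⟨t', hL, hM⟩ := h
  refine ⟨.K1 t', fun n => ?_, fun n => M_K1 (hM n)⟩
  cases n with
  | zero => exact L_zero _ _
  | succ n => rw [L_succ]; intro u z _; exact hL n

theorem GV_S1 {t : C} (h : GC t) : GV (.S1 t) := by
  obtain ⟨t', hL, hM⟩ := h
  by_cases hc : ∃ j p, Ev t' j p
  · obtain ⟨j, p', hp'⟩ := hc
    obtain ⟨i, p, hp, hpL⟩ := E_all hL hp'
    refine ⟨gS1 p', fun n => ?_, fun n => gS1_M (E_ret_of (hM n) hp')⟩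
    cases n with
    | zero => exact L_zero _ _
    | succ n => exact gS1_L (hpL _) hp
  · refine ⟨.S1 t', fun n => ?_, fun n => M_S1 (hM n)⟩
    cases n with
    | zero => exact L_zero _ _
    | succ n =>
      rw [L_succ]; intro u z _ J v hev hJ
      obtain ⟨rfl, rfl⟩ := ev_ret.1 hev
      exact ⟨_, _, .ret _, L_S2_div (fun h => hc h.1) _ _⟩

theorem GV_S2 {t s : C} (h : GC t) (h' : GC s) : GV (.S2 t s) := by
  obtain ⟨t', hL, hM⟩ := h
  obtain ⟨s', hL', hM'⟩ := h'
  by_cases hc : (∃ j p, Ev t' j p) ∧ ∃ j p, Ev s' j p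
  · obtain ⟨⟨j, p', hp'⟩, ⟨k, q', hq'⟩⟩ := hc
    obtain ⟨i, p, hp, hpL⟩ := E_all hL hp'
    obtain ⟨i', q, hq, hqL⟩ := E_all hL' hq'
    refine ⟨gS2 p' q', fun n => ?_, fun n => gS2_M (E_ret_of (hM n) hp') (E_ret_of (hM' n) hq')⟩
    cases n with
    | zero => exact L_zero _ _
    | succ n => exact gS2_L (hpL _) (hqL _) hp hq
  · exact ⟨.S2 t' s', fun n => L_S2_div hc _ _, fun n => M_S2 (hM n) (hM' n)⟩

theorem GC_ret {v : V} (h : GV v) : GC (.ret v) := by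
  obtain ⟨v', hL, hM⟩ := h
  refine ⟨.ret v', E_of ?_, fun n => M_ret (hM n)⟩
  intro j w hev
  obtain ⟨rfl, rfl⟩ := ev_ret.1 hev
  exact ⟨_, _, .ret _, hL⟩

theorem GC_circ {v w : V} (h : GV v) (h' : GV w) : GC (.circ v w) := by
  obtain ⟨v', hL, hM⟩ := h
  obtain ⟨w', hL', hM'⟩ := h'
  refine ⟨.circ v' w', E_of ?_, fun n => M_circ (hM n) (hM' n)⟩
  intro j r hev
  obtain ⟨k, hk, rfl⟩ := ev_circ.1 hev
  obtain ⟨_, _, h1, h2⟩ := E_all (L_all_ap hL hL') hk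
  exact ⟨_, _, .circ h1, h2⟩

theorem GC_rtri {v : V} {s : C} (h : GV v) (h' : GC s) : GC (.rtri v s) := by
  obtain ⟨v', hL, hM⟩ := h
  obtain ⟨w', hL', hM'⟩ := h'
  refine ⟨.rtri v' w', E_of ?_, fun n => M_rtri (hM n) (hM' n)⟩
  intro j r hev
  obtain ⟨i, q, k, hi, hk, rfl⟩ := ev_rtri.1 hev
  obtain ⟨_, _, h1, h2⟩ := E_all hL' hi
  obtain ⟨_, _, h3, h4⟩ := E_all (L_all_ap hL h2) hk
  exact ⟨_, _, .rtri h1 h3, h4⟩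

theorem GC_ltri {v : V} {s : C} (h : GV v) (h' : GC s) : GC (.ltri s v) := by
  obtain ⟨v', hL, hM⟩ := h
  obtain ⟨w', hL', hM'⟩ := h'
  refine ⟨.ltri w' v', E_of ?_, fun n => M_ltri (hM n) (hM' n)⟩
  intro j r hev
  obtain ⟨i, q, k, hi, hk, rfl⟩ := ev_ltri.1 hev
  obtain ⟨_, _, h1, h2⟩ := E_all hL' hi
  obtain ⟨_, _, h3, h4⟩ := E_all (L_all_ap h2 hL) hk
  exact ⟨_, _, .ltri h1 h3, h4⟩

theorem GC_bull {t s : C} (h : GC t) (h' : GC s) : GC (.bull t s) := by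
  obtain ⟨v', hL, hM⟩ := h
  obtain ⟨w', hL', hM'⟩ := h'
  refine ⟨.bull v' w', E_of ?_, fun n => M_bull (hM n) (hM' n)⟩
  intro j r hev
  obtain ⟨j, p, i, q, k, hj, hi, hk, rfl⟩ := ev_bull.1 hev
  obtain ⟨_, _, h1, h2⟩ := E_all hL hj
  obtain ⟨_, _, h3, h4⟩ := E_all hL' hi
  obtain ⟨_, _, h5, h6⟩ := E_all (L_all_ap h2 h4) hk
  exact ⟨_, _, .bull h1 h3 h5, h6⟩

mutual
theorem good_V : ∀ v : V, GV v
  | .I => ⟨gI, gI_L, gI_M⟩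
  | .K => ⟨gK, gK_L, gK_M⟩
  | .S => ⟨gS, gS_L, gS_M⟩
  | .K1 t => GV_K1 (good_C t)
  | .S1 t => GV_S1 (good_C t)
  | .S2 t s => GV_S2 (good_C t) (good_C s)
theorem good_C : ∀ t : C, GC t
  | .ret v => GC_ret (good_V v)
  | .bull t s => GC_bull (good_C t) (good_C s)
  | .rtri v s => GC_rtri (good_V v) (good_C s)
  | .ltri t v => GC_ltri (good_V v) (good_C t)
  | .circ v w => GC_circ (good_V v) (good_V w)
end

theorem M_L_trans : ∀ (n : ℕ) {p p' q : V}, M n p p' → (∀ k, L k p' q) → M n p q := by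
  intro n
  induction n using Nat.strong_induction_on with
  | _ n ih =>
    intro p p' q hM hL
    rw [M_iff]
    intro m hm a b hab j v hev hj
    obtain ⟨b', hbL, hbM⟩ := good_V b
    obtain ⟨i, w, hw, hMw⟩ := M_iff.1 hM m hm a b' (M_trans m hab hbM) j v hev hj
    obtain ⟨i', w', hw', hLw⟩ := E_all (L_all_ap hL hbL) hw
    exact ⟨i', w', hw', ih _ (by omega) hMw hLw⟩

theorem L_M {v w : V} (h : ∀ n, L n v w) (n : ℕ) : M n v w := M_L_trans n (M_refl n v) h

theorem cong_M : IsCong (fun v w => ∀ n, M n v w) (fun t s => ∀ n, E M n t s) :=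
  ⟨M_S, M_K, M_I, fun _ _ h n => M_K1 (h n), fun _ _ h n => M_S1 (h n),
    fun _ _ _ _ h h' n => M_S2 (h n) (h' n), fun _ _ h n => M_ret (h n),
    fun _ _ _ _ h h' n => M_bull (h n) (h' n), fun _ _ _ _ h h' n => M_rtri (h n) (h' n),
    fun _ _ _ _ h h' n => M_ltri (h n) (h' n), fun _ _ _ _ h h' n => M_circ (h n) (h' n)⟩

theorem subO_M : SubO (fun v w => ∀ n, M n v w) (fun t s => ∀ n, E M n t s) := by
  refine ⟨fun _ _ _ => trivial, fun t s h ht => ?_⟩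
  obtain ⟨j, v, hv⟩ := convC_iff.1 ht
  obtain ⟨i, w, hw, _⟩ := E_all h hv
  exact convC_iff.2 ⟨i, w, hw⟩

end FGP

open FG in
/-- The step-indexed logical relation for xCL_fg is sound for the contextual preorder. -/
theorem fg_logRel_sound :
    (∀ v w : V, LV v w → CtxLeV v w) ∧
    (∀ t s : C, LC t s → CtxLeC t s) := by
  refine ⟨fun v w h => ⟨_, _, FGP.cong_M, FGP.subO_M, FGP.L_M h⟩,
    fun t s h => ⟨_, _, FGP.cong_M, FGP.subO_M, FGP.E_of ?_⟩⟩
  intro j v hv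
  obtain ⟨i, w, hw, hL⟩ := FGP.E_all (fun n => (FGP.Lc_iff n t s).1 (h n)) hv
  exact ⟨i, w, hw, FGP.L_M hL⟩
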